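/- Let $n < a \leq b$. Then the operator $\mathcal{K}_a^b$ is of weak type $(1, b/a)$: there is a constant $C$ such that for every $f \in L^1(\mathbb{R}^n)$ and every $\lambda > 0$, the Lebesgue measure of $\{x \in \mathbb{R}^n : |\mathcal{K}_a^b f(x)| > \lambda\}$ is at most $\left(C \|f\|_{L^1} / \lambda\right)^{b/a}$. -/

import Mathlib

open MeasureTheory
open scoped ENNReal

/-- The integral operator `𝒦ₐᵇ f (x) = ∫ |‖x‖ₐᵃ - ‖y‖ₐᵃ|^{-n/b} f(y) dy`,
where `‖x‖ₐᵃ = ∑ᵢ |xᵢ|^a`. -/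
noncomputable def Kab (n : ℕ) (a b : ℝ) (f : EuclideanSpace ℝ (Fin n) → ℝ)
    (x : EuclideanSpace ℝ (Fin n)) : ℝ :=
  ∫ y : EuclideanSpace ℝ (Fin n),
    |(∑ i, |x i| ^ a) - ∑ i, |y i| ^ a| ^ (-((n : ℝ) / b)) * f y

lemma lint_rpow (r u : ℝ) (hr : -1 < r) (hu : 0 ≤ u) :
    ∫⁻ t in Set.Ioc 0 u, ENNReal.ofReal (t ^ r) = ENNReal.ofReal (u ^ (r+1) / (r+1)) := by
  have hi := (intervalIntegral.intervalIntegrable_rpow' (a := 0) (b := u) hr)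
  rw [intervalIntegrable_iff_integrableOn_Ioc_of_le hu] at hi
  rw [← ofReal_integral_eq_lintegral_ofReal hi, ← intervalIntegral.integral_of_le hu,
    integral_rpow (Or.inl hr), Real.zero_rpow (by linarith), sub_zero]
  filter_upwards [ae_restrict_mem measurableSet_Ioc] with t ht
  exact Real.rpow_nonneg ht.1.le _

noncomputable def dens (c α : ℝ) (t : ℝ) : ℝ≥0∞ :=
  (Set.Ioi (0:ℝ)).indicator (fun t => ENNReal.ofReal (c * α) * ENNReal.ofReal (t ^ (α - 1))) t

lemma dens_meas (c α : ℝ) : Measurable (dens c α) := by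
  unfold dens
  exact Measurable.indicator (by fun_prop) measurableSet_Ioi

lemma W_eq (W : Measure ℝ) (c α : ℝ) (hc : 0 ≤ c) (hα : 0 < α)
    (h0 : W (Set.Iio 0) = 0)
    (h1 : ∀ u : ℝ, 0 ≤ u → W (Set.Iic u) = ENNReal.ofReal (c * u ^ α)) :
    W = volume.withDensity (dens c α) := by
  have key : ∀ u, W (Set.Iic u) = volume.withDensity (dens c α) (Set.Iic u) := by
    intro u
    rw [withDensity_apply _ measurableSet_Iic]
    unfold dens
    rw [setLIntegral_indicator measurableSet_Ioi, Set.Ioi_inter_Iic]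
    rcases lt_or_ge u 0 with hu | hu
    · rw [Set.Ioc_eq_empty (by simpa using hu.le)]
      simpa using measure_mono_null (Set.Iic_subset_Iio.2 hu) h0
    · rw [h1 u hu, lintegral_const_mul _ (by fun_prop), lint_rpow _ _ (by linarith) hu,
        ← ENNReal.ofReal_mul (by positivity)]
      congr 1
      rw [sub_add_cancel]
      field_simp
  have fin : ∀ u, W (Set.Iic u) ≠ ∞ := by
    intro u
    refine ne_top_of_le_ne_top ?_ (measure_mono (Set.Iic_subset_Iic.2 (le_max_left u 0)))
    rw [h1 _ (le_max_right u 0)]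
    exact ENNReal.ofReal_ne_top
  apply Measure.ext_of_Ioc'
  · intro p q hpq
    exact ne_top_of_le_ne_top (fin q) (measure_mono Set.Ioc_subset_Iic_self)
  · intro p q hpq
    rw [← Set.Iic_sdiff_Iic, measure_sdiff (Set.Iic_subset_Iic.2 hpq.le) nullMeasurableSet_Iic (fin p),
      measure_sdiff (Set.Iic_subset_Iic.2 hpq.le) nullMeasurableSet_Iic (by rw [← key]; exact fin p),
      key, key]

noncomputable def HH (α s t : ℝ) : ℝ≥0∞ :=
  if |t - s| < t / 2 then ENNReal.ofReal (|t - s| ^ (-α)) else 0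

lemma H_bound (c α s : ℝ) (hc : 0 ≤ c) (hα : 0 < α) (hα1 : α < 1) (hs : 0 ≤ s) :
    ∫⁻ t, HH α s t ∂(volume.withDensity (dens c α)) ≤
      ENNReal.ofReal (c * α * (1/2) ^ (α - 1) * (2 / (1 - α))) := by
  have hHm : Measurable (HH α s) := by
    unfold HH
    exact Measurable.ite (measurableSet_lt (by fun_prop) (by fun_prop)) (by fun_prop) (by fun_prop)
  rw [lintegral_withDensity_eq_lintegral_mul _ (dens_meas c α) hHm]
  rcases hs.eq_or_lt with rfl | hs
  · have : (dens c α * HH α 0) = 0 := by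
      ext t
      simp only [Pi.mul_apply, HH, Pi.zero_apply]
      rw [if_neg]; simp
      intro h
      have := abs_nonneg (t - 0)
      have h2 := le_abs_self (t - 0)
      linarith
    rw [this]; simp
  set h : ℝ → ℝ≥0∞ := (Set.Ioc 0 s).indicator (fun v => ENNReal.ofReal (v ^ (-α))) with hh
  have hm : Measurable h := Measurable.indicator (by fun_prop) measurableSet_Ioc
  have hint : ∫⁻ v, h v = ENNReal.ofReal (s ^ (1 - α) / (1 - α)) := by
    rw [hh, lintegral_indicator measurableSet_Ioc, lint_rpow _ _ (by linarith) hs.le]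
    rw [show -α + 1 = 1 - α by ring]
  have pt : ∀ t, (dens c α * HH α s) t ≤
      ENNReal.ofReal (c * α * (s/2) ^ (α - 1)) * (h (t - s) + h (-(t - s))) := by
    intro t
    simp only [Pi.mul_apply, HH]
    split_ifs with hlt
    swap; · simp
    have ht : 0 < t := by have := abs_nonneg (t - s); linarith
    have hab := abs_lt.1 hlt
    have hst : s / 2 ≤ t := by linarith
    unfold dens
    rw [Set.indicator_of_mem (by exact ht), ← ENNReal.ofReal_mul (by positivity)]
    gcongr ENNReal.ofReal (_ * ?_) * ?_
    · exact Real.rpow_le_rpow_of_nonpos (by positivity) hst (by linarith)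
    · rcases lt_trichotomy (t - s) 0 with hv | hv | hv
      · refine le_trans ?_ le_add_self
        rw [hh, Set.indicator_of_mem (by constructor <;> linarith), abs_of_neg hv]
      · rw [hv, abs_zero, Real.zero_rpow (by linarith)]; simp
      · refine le_trans ?_ le_self_add
        rw [hh, Set.indicator_of_mem (by constructor <;> linarith), abs_of_pos hv]
  calc _ ≤ ∫⁻ t, ENNReal.ofReal (c * α * (s/2) ^ (α - 1)) * (h (t - s) + h (-(t - s))) :=
        lintegral_mono pt
    _ = ENNReal.ofReal (c * α * (s/2) ^ (α - 1)) *
        (ENNReal.ofReal (s ^ (1 - α) / (1 - α)) + ENNReal.ofReal (s ^ (1 - α) / (1 - α))) := by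
      rw [lintegral_const_mul _ (by fun_prop), lintegral_add_left (by fun_prop),
        lintegral_sub_right_eq_self h s, lintegral_sub_right_eq_self (fun v => h (-v)) s,
        lintegral_neg_eq_self h, hint]
    _ ≤ _ := by
      have h1α : 0 < 1 - α := by linarith
      rw [← ENNReal.ofReal_add (by positivity) (by positivity), ← ENNReal.ofReal_mul (by positivity)]
      apply ENNReal.ofReal_le_ofReal
      apply le_of_eq
      have e : s ^ (α - 1) * s ^ (1 - α) = 1 := by
        rw [← Real.rpow_add hs]; simp
      rw [div_eq_mul_one_div s 2, Real.mul_rpow hs.le (by norm_num)]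
      linear_combination (c * α * (1/2) ^ (α - 1) * (2 / (1 - α))) * e

lemma jensen {X : Type*} [MeasurableSpace X] (ν : Measure X) (p : ℝ) (hp : 1 ≤ p)
    (φ : X → ℝ≥0∞) (hφ : Measurable φ) :
    (∫⁻ y, φ y ∂ν) ^ p ≤ (∫⁻ y, φ y ^ p ∂ν) * ν Set.univ ^ (p - 1) := by
  have h := eLpNorm'_le_eLpNorm'_mul_rpow_measure_univ (μ := ν) (f := φ) one_pos hp
    hφ.aestronglyMeasurable
  simp only [eLpNorm', enorm_eq_self, ENNReal.rpow_one, div_one] at h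
  have h2 := ENNReal.rpow_le_rpow h (by linarith : 0 ≤ p)
  rw [ENNReal.mul_rpow_of_nonneg _ _ (by linarith), ← ENNReal.rpow_mul, ← ENNReal.rpow_mul] at h2
  convert h2 using 2
  · rw [one_div_mul_cancel (by linarith), ENNReal.rpow_one]
  · congr 1; field_simp

noncomputable def GG (n : ℕ) (a : ℝ) (x : EuclideanSpace ℝ (Fin n)) : ℝ := ∑ i, |x i| ^ a

lemma GG_meas (n : ℕ) (a : ℝ) : Measurable (GG n a) := by
  unfold GG; fun_prop

lemma GG_nonneg (n : ℕ) (a : ℝ) (x) : 0 ≤ GG n a x := by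
  unfold GG; positivity

lemma vol_G (n : ℕ) (a : ℝ) (hn : 0 < n) (ha : (n : ℝ) < a) : ∃ c : ℝ, 0 ≤ c ∧ ∀ u, 0 ≤ u →
    volume {x | GG n a x ≤ u} = ENNReal.ofReal (c * u ^ ((n:ℝ) / a)) := by
  have : Nonempty (Fin n) := ⟨⟨0, hn⟩⟩
  have h1n : (1:ℝ) ≤ n := by exact_mod_cast hn
  have ha0 : 0 < a := by linarith
  refine ⟨(2 * Real.Gamma (1 / a + 1)) ^ n / Real.Gamma (n / a + 1), ?_, fun u hu => ?_⟩
  · have := Real.Gamma_pos_of_pos (s := 1 / a + 1) (by positivity)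
    have := Real.Gamma_pos_of_pos (s := n / a + 1) (by positivity)
    positivity
  have h := volume_sum_rpow_le (Fin n) (p := a) (by linarith) (u ^ (1 / a))
  rw [← (PiLp.volume_preserving_ofLp (Fin n)).measure_preimage
    (measurableSet_le (by fun_prop) (by fun_prop)).nullMeasurableSet] at h
  have e : {x | GG n a x ≤ u} = (WithLp.ofLp : EuclideanSpace ℝ (Fin n) → _) ⁻¹'
      {x | (∑ i, |x i| ^ a) ^ (1 / a) ≤ u ^ (1 / a)} := by
    ext x
    simp only [Set.mem_ofPred_eq, Set.mem_preimage]
    rw [Real.rpow_le_rpow_iff (by positivity) hu (by positivity)]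
    rfl
  rw [e, h, Fintype.card_fin, ← ENNReal.ofReal_pow (by positivity), ← ENNReal.ofReal_mul (by positivity),
    ← Real.rpow_natCast, ← Real.rpow_mul hu]
  congr 1
  rw [mul_comm]; congr 2; ring

lemma HH_meas2 (α : ℝ) : Measurable (fun q : ℝ × ℝ => HH α q.1 q.2) := by
  unfold HH
  exact Measurable.ite (measurableSet_lt (by fun_prop) (by fun_prop)) (by fun_prop) (by fun_prop)

lemma HH_pow (β p s t : ℝ) (hp : 0 < p) : HH β s t ^ p = HH (β * p) s t := by
  unfold HH
  split_ifs
  · rw [ENNReal.ofReal_rpow_of_nonneg (by positivity) hp.le, ← Real.rpow_mul (abs_nonneg _),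
      neg_mul]
  · exact ENNReal.zero_rpow_of_pos hp

lemma schur {X : Type*} [MeasurableSpace X] (ν μ : Measure X) [SFinite ν] [SFinite μ]
    (p M N : ℝ) (hp1 : 1 ≤ p) (hM0 : 0 ≤ M) (hNp : 0 < N) (k : X → X → ℝ≥0∞)
    (hk : Measurable (fun q : X × X => k q.2 q.1)) (hνu : ν Set.univ = ENNReal.ofReal N)
    (hker : ∀ y, ∫⁻ x, k y x ^ p ∂μ ≤ ENNReal.ofReal M) :
    ∫⁻ x, (∫⁻ y, k y x ∂ν) ^ p ∂μ ≤ ENNReal.ofReal (M * N ^ p) := by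
  have hjp : Measurable (fun q : X × X => k q.2 q.1 ^ p) := hk.pow_const p
  have hjp1 : Measurable (fun x => ∫⁻ y, k y x ^ p ∂ν) := hjp.lintegral_prod_right'
  have hjx : ∀ x, Measurable (fun y => k y x) := fun x =>
    hk.comp (measurable_prodMk_left (x := x))
  calc _ ≤ ∫⁻ x, (∫⁻ y, k y x ^ p ∂ν) * ν Set.univ ^ (p - 1) ∂μ :=
        lintegral_mono fun x => jensen ν p hp1 (fun y => k y x) (hjx x)
    _ = (∫⁻ x, ∫⁻ y, k y x ^ p ∂ν ∂μ) * ν Set.univ ^ (p - 1) :=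
        lintegral_mul_const _ hjp1
    _ = (∫⁻ y, ∫⁻ x, k y x ^ p ∂μ ∂ν) * ν Set.univ ^ (p - 1) := by
        rw [lintegral_lintegral_swap hjp.aemeasurable]
    _ ≤ (∫⁻ y, ENNReal.ofReal M ∂ν) * ν Set.univ ^ (p - 1) := by
        gcongr with y; exact hker y
    _ = _ := by
        rw [lintegral_const, hνu, ENNReal.ofReal_rpow_of_pos hNp, ← ENNReal.ofReal_mul hM0,
          ← ENNReal.ofReal_mul (by positivity)]
        congr 1
        rw [mul_assoc]; congr 1
        nth_rw 1 [← Real.rpow_one N]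
        rw [← Real.rpow_add hNp]; congr 1; ring

set_option maxHeartbeats 1000000 in
lemma Kab_pos_dim (n : ℕ) (hn : 0 < n) (a b : ℝ) (ha : (n : ℝ) < a) (hab : a ≤ b) :
    ∃ C : ℝ, 0 < C ∧ ∀ f : EuclideanSpace ℝ (Fin n) → ℝ, Integrable f volume →
      ∀ lam : ℝ, 0 < lam →
        volume {x : EuclideanSpace ℝ (Fin n) | lam < |Kab n a b f x|}
          ≤ ENNReal.ofReal ((C * (∫ y, |f y|) / lam) ^ (b / a)) := by
  have hn0 : (0:ℝ) < n := by exact_mod_cast hn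
  have ha0 : 0 < a := by linarith
  have hb0 : 0 < b := by linarith
  obtain ⟨c, hc, hvol⟩ := vol_G n a hn ha
  set α : ℝ := (n:ℝ) / a with hα
  set β : ℝ := (n:ℝ) / b with hβ
  set p : ℝ := b / a with hp
  have hα0 : 0 < α := by positivity
  have hα1 : α < 1 := by rw [hα, div_lt_one ha0]; exact ha
  have hβ0 : 0 < β := by positivity
  have hp1 : 1 ≤ p := by rw [hp, one_le_div ha0]; exact hab
  have hp0 : 0 < p := by linarith
  have hβp : β * p = α := by rw [hβ, hp, hα]; field_simp
  set M : ℝ := c * α * (1/2) ^ (α - 1) * (2 / (1 - α)) with hM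
  have hM0 : 0 ≤ M := by
    have : 0 < 1 - α := by linarith
    positivity
  have hGm := GG_meas n a
  have hW : volume.map (GG n a) = volume.withDensity (dens c α) := by
    apply W_eq _ _ _ hc hα0
    · rw [Measure.map_apply hGm measurableSet_Iio]
      convert measure_empty (μ := volume)
      ext x
      simpa using GG_nonneg n a x
    · intro u hu
      rw [Measure.map_apply hGm measurableSet_Iic]
      exact hvol u hu
  have hker : ∀ y, ∫⁻ x, HH β (GG n a y) (GG n a x) ^ p ≤ ENNReal.ofReal M := by
    intro y
    simp_rw [HH_pow _ _ _ _ hp0, hβp]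
    have hm : Measurable (HH α (GG n a y)) := (HH_meas2 α).comp (by fun_prop : Measurable fun t : ℝ => (GG n a y, t))
    rw [← lintegral_map hm hGm, hW]
    exact H_bound c α _ hc hα0 hα1 (GG_nonneg n a y)
  set D : ℝ := max 1 (c * 2 ^ α + M) with hD
  have hD1 : 1 ≤ D := le_max_left _ _
  refine ⟨2 * D, by positivity, fun f hf lam hlam => ?_⟩
  set N : ℝ := ∫ y, |f y| with hN
  have hN0 : 0 ≤ N := integral_nonneg fun y => abs_nonneg _
  set ν : Measure (EuclideanSpace ℝ (Fin n)) := volume.withDensity (fun y => ‖f y‖ₑ) with hν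
  have hνu : ν Set.univ = ENNReal.ofReal N := by
    rw [hν, withDensity_apply _ MeasurableSet.univ, Measure.restrict_univ, hN]
    exact (ofReal_integral_norm_eq_lintegral_enorm hf).symm
  have : IsFiniteMeasure ν := ⟨by rw [hνu]; exact ENNReal.ofReal_lt_top⟩
  -- pointwise bound of Kab
  have hK : ∀ x, ENNReal.ofReal |Kab n a b f x| ≤
      ∫⁻ y, ENNReal.ofReal (|GG n a x - GG n a y| ^ (-β)) ∂ν := by
    intro x
    rw [hν, lintegral_withDensity_eq_lintegral_mul₀ hf.1.enorm (by fun_prop)]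
    have h := enorm_integral_le_lintegral_enorm (μ := volume) (fun y : EuclideanSpace ℝ (Fin n) =>
      |(∑ i, |x i| ^ a) - ∑ i, |y i| ^ a| ^ (-((n : ℝ) / b)) * f y)
    rw [← ofReal_norm] at h
    refine h.trans (le_of_eq (lintegral_congr fun y => ?_))
    rw [enorm_mul, Real.enorm_eq_ofReal (Real.rpow_nonneg (abs_nonneg _) _), mul_comm]
    rfl
  set K1 : EuclideanSpace ℝ (Fin n) → ℝ≥0∞ := fun x => ∫⁻ y, HH β (GG n a y) (GG n a x) ∂ν with hK1
  have hjm : Measurable (fun q : EuclideanSpace ℝ (Fin n) × EuclideanSpace ℝ (Fin n) =>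
      HH β (GG n a q.2) (GG n a q.1)) :=
    (HH_meas2 β).comp (f := fun q : EuclideanSpace ℝ (Fin n) × EuclideanSpace ℝ (Fin n) => (GG n a q.2, GG n a q.1))
      (by fun_prop)
  have hK1m : Measurable K1 := hjm.lintegral_prod_right'
  rcases hN0.eq_or_lt with hNz | hNp
  · have : {x : EuclideanSpace ℝ (Fin n) | lam < |Kab n a b f x|} = ∅ := by
      ext x
      simp only [Set.mem_ofPred_eq, Set.mem_empty_iff_false, iff_false, not_lt]
      have h := hK x
      have hz : ν = 0 := by
        rw [← Measure.measure_univ_eq_zero, hνu, ← hNz]; simp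
      rw [hz] at h
      simp at h
      simp [h, hlam.le]
    rw [this]; simp
  set R : ℝ := 2 * N / lam with hR
  have hR0 : 0 < R := by positivity
  set u : ℝ := 2 * R ^ (1 / β) with hu
  have hu0 : 0 < u := by positivity
  have hsub : {x : EuclideanSpace ℝ (Fin n) | lam < |Kab n a b f x|} ⊆
      {x | GG n a x ≤ u} ∪ {x | ENNReal.ofReal (lam / 2) ^ p ≤ K1 x ^ p} := by
    intro x hx
    by_contra hcon
    simp only [Set.mem_union, Set.mem_ofPred_eq, not_or, not_le] at hcon hx
    obtain ⟨h1, h2⟩ := hcon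
    rw [ENNReal.rpow_lt_rpow_iff hp0] at h2
    have hb : ∀ y, ENNReal.ofReal (|GG n a x - GG n a y| ^ (-β)) ≤
        HH β (GG n a y) (GG n a x) + ENNReal.ofReal (R⁻¹) := by
      intro y
      unfold HH
      split_ifs with h
      · exact le_self_add
      · rw [zero_add]
        apply ENNReal.ofReal_le_ofReal
        have hle : R ^ (1 / β) ≤ |GG n a x - GG n a y| := by
          push Not at h; rw [hu] at h1; linarith
        calc _ ≤ (R ^ (1 / β)) ^ (-β) :=
              Real.rpow_le_rpow_of_nonpos (by positivity) hle (by linarith)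
          _ = R⁻¹ := by
              rw [← Real.rpow_mul hR0.le, ← Real.rpow_neg_one]
              congr 1; field_simp
    have h3 : ENNReal.ofReal |Kab n a b f x| < ENNReal.ofReal lam := by
      calc _ ≤ _ := hK x
        _ ≤ ∫⁻ y, (HH β (GG n a y) (GG n a x) + ENNReal.ofReal (R⁻¹)) ∂ν := lintegral_mono hb
        _ = K1 x + ENNReal.ofReal (lam / 2) := by
          rw [lintegral_add_right _ (by fun_prop), lintegral_const, hνu,
            ← ENNReal.ofReal_mul (by positivity)]
          congr 2
          rw [hR]; field_simp
        _ < ENNReal.ofReal (lam / 2) + ENNReal.ofReal (lam / 2) :=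
          ENNReal.add_lt_add_right ENNReal.ofReal_ne_top h2
        _ = ENNReal.ofReal lam := by
          rw [← ENNReal.ofReal_add (by positivity) (by positivity)]; simp
    exact absurd ((ENNReal.ofReal_lt_ofReal_iff hlam).1 h3) (not_lt.2 hx.le)
  have hI : ∫⁻ x, K1 x ^ p ≤ ENNReal.ofReal (M * N ^ p) := by
    refine (schur ν volume p M N hp1 hM0 hNp (fun y x => HH β (GG n a y) (GG n a x)) hjm hνu hker)
  have hV1 : volume {x | GG n a x ≤ u} = ENNReal.ofReal (c * 2 ^ α * R ^ p) := by
    rw [hvol u hu0.le, hu, Real.mul_rpow (by norm_num) (by positivity), ← Real.rpow_mul hR0.le,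
      ← mul_assoc]
    congr 3
    rw [← hβp]; field_simp
  have hV2 : volume {x | ENNReal.ofReal (lam / 2) ^ p ≤ K1 x ^ p} ≤ ENNReal.ofReal (M * R ^ p) := by
    have hl2 : 0 < lam / 2 := by positivity
    rw [ENNReal.ofReal_rpow_of_pos hl2]
    refine (meas_ge_le_lintegral_div (hK1m.pow_const p).aemeasurable ?_ ENNReal.ofReal_ne_top).trans ?_
    · simp; positivity
    refine (ENNReal.div_le_div_right hI _).trans (le_of_eq ?_)
    rw [← ENNReal.ofReal_div_of_pos (by positivity), mul_div_assoc,
      ← Real.div_rpow hN0 hl2.le]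
    congr 3
    rw [hR]; field_simp
  calc _ ≤ _ := measure_mono hsub
    _ ≤ _ := measure_union_le _ _
    _ ≤ ENNReal.ofReal (c * 2 ^ α * R ^ p) + ENNReal.ofReal (M * R ^ p) := add_le_add hV1.le hV2
    _ = ENNReal.ofReal ((c * 2 ^ α + M) * R ^ p) := by
      rw [← ENNReal.ofReal_add (by positivity) (by positivity)]; congr 1; ring
    _ ≤ _ := by
      apply ENNReal.ofReal_le_ofReal
      have e : 2 * D * N / lam = D * R := by rw [hR]; ring
      rw [e, Real.mul_rpow (by positivity) hR0.le]
      gcongr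
      calc _ ≤ D := le_max_right _ _
        _ = D ^ (1:ℝ) := (Real.rpow_one D).symm
        _ ≤ D ^ p := Real.rpow_le_rpow_of_exponent_le hD1 hp1

/-- `𝒦ₐᵇ` is of weak type `(1, b/a)` when `n < a ≤ b`. -/
theorem Kab_weak_type (n : ℕ) (a b : ℝ) (ha : (n : ℝ) < a) (hab : a ≤ b) :
    ∃ C : ℝ, 0 < C ∧ ∀ f : EuclideanSpace ℝ (Fin n) → ℝ, Integrable f volume →
      ∀ lam : ℝ, 0 < lam →
        volume {x : EuclideanSpace ℝ (Fin n) | lam < |Kab n a b f x|}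
          ≤ ENNReal.ofReal ((C * (∫ y, |f y|) / lam) ^ (b / a)) := by
  rcases Nat.eq_zero_or_pos n with rfl | hn
  · refine ⟨1, one_pos, fun f hf lam hlam => ?_⟩
    have ha0 : 0 < a := by simpa using ha
    rcases Set.eq_empty_or_nonempty {x : EuclideanSpace ℝ (Fin 0) | lam < |Kab 0 a b f x|} with
      h | ⟨x, hx⟩
    · rw [h]; simp
    have hx' : lam < ∫ y, |f y| := by
      refine lt_of_lt_of_le hx ?_
      unfold Kab
      refine (abs_integral_le_integral_abs).trans (le_of_eq ?_)
      simp
    calc _ ≤ volume (Set.univ : Set (EuclideanSpace ℝ (Fin 0))) := measure_mono (Set.subset_univ _)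
      _ = 1 := by
        rw [← (PiLp.volume_preserving_toLp (Fin 0)).map_eq,
          Measure.map_apply (PiLp.volume_preserving_toLp (Fin 0)).measurable MeasurableSet.univ]
        simp [volume_pi]
      _ ≤ _ := by
        rw [ENNReal.one_le_ofReal]
        apply Real.one_le_rpow
        · rw [one_mul, one_le_div hlam]; exact hx'.le
        · have : 0 < b := by linarith
          positivity
  · exact Kab_pos_dim n hn a b ha hab
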